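/- Let 1 ≤ j ≤ N−2 and let m_j ≥ m_{j+1} ≥ … ≥ m_{N−1} ≥ m_N := 0 be nonnegative integers. Put Y^{(j+1)} = ∏_{a=j+2}^{N−1} U(t^{a−1}_{m_{a−1}−m_a+1},…,t^{a−1}_{m_{a−1}}; t^a_1,…,t^a_{m_a}), Y^{(j)} = U(t^j_{m_j−m_{j+1}+1},…,t^j_{m_j}; t^{j+1}_1,…,t^{j+1}_{m_{j+1}}) · Y^{(j+1)}. Then Sym_{t^{j+1}_{1..m_{j+1}}}( [ Sym_{t^{j+2}_{1..m_{j+2}}}( ⋯ Sym_{t^{N−1}_{1..m_{N−1}}}(Y^{(j+1)}) ⋯ ) ] · [ ∘_{a=j+1}^{N−1} Sym_{t^{j+1}_{m_{j+1}−m_a+1 .. m_{j+1}−m_{a+1}}} ]( U(t^j_{m_j−m_{j+1}+1},…,t^j_{m_j}; t^{j+1}_1,…,t^{j+1}_{m_{j+1}}) ) ) = ∏_{a=j+1}^{N−1} (m_a − m_{a+1})! · Sym_{t̄^{j+1..N−1}}( Y^{(j)} ), where ∘_{a} denotes successive application of the q-symmetrizations over the indicated disjoint blocks of type-(j+1) variables,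 and Sym_{t̄^{j+1..N−1}} is the q-symmetrization over all variables of all types j+1,…,N−1 (the group ∏_{a=j+1}^{N−1} S_{m_a}). -/

import Mathlib

open scoped BigOperators
open MvPolynomial

noncomputable section

/-- The base field `ℂ(q)`. -/
abbrev F0 : Type := RatFunc ℂ

/-- The field `K` of rational functions over `ℂ(q)` in the variables `t^a_ℓ`,
indexed by pairs `(a, ℓ) : ℕ × ℕ`. -/
abbrev K2 : Type := FractionRing (MvPolynomial (ℕ × ℕ) F0)

/-- The element `q` of `K`. -/
def q2 : K2 := algebraMap (MvPolynomial (ℕ × ℕ) F0) _ (C RatFunc.X)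

/-- The variable `t^a_ℓ`. -/
def tV (a ℓ : ℕ) : K2 := algebraMap (MvPolynomial (ℕ × ℕ) F0) _ (X (a, ℓ))

/-- The interval `{lo+1, …, lo+k} ⊆ ℕ` identified with `Fin k`. -/
def intervalEquiv (lo k : ℕ) : Fin k ≃ {x : ℕ // lo + 1 ≤ x ∧ x < lo + 1 + k} where
  toFun i := ⟨lo + 1 + (i : ℕ), ⟨Nat.le_add_right _ _, by have := i.isLt; omega⟩⟩
  invFun x := ⟨(x : ℕ) - (lo + 1), by have := x.2; omega⟩
  left_inv i := Fin.ext (by simp)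
  right_inv x := Subtype.ext (by have := x.2; simp; omega)

/-- The permutation of `ℕ` acting as `σ` on the interval `{lo+1,…,lo+k}`
(sending `lo+1+i ↦ lo+1+σ(i)`) and as the identity elsewhere. -/
def intervalPerm (lo k : ℕ) (σ : Equiv.Perm (Fin k)) : Equiv.Perm ℕ :=
  σ.extendDomain (intervalEquiv lo k)

/-- The permutation of the variable indices permuting the second component of
variables of type `a` by `intervalPerm lo k σ`, fixing all other variables. -/
def blockPerm (a lo k : ℕ) (σ : Equiv.Perm (Fin k)) : Equiv.Perm (ℕ × ℕ) :=
  Equiv.prodShear (Equiv.refl ℕ)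
    (fun b => if b = a then intervalPerm lo k σ else Equiv.refl ℕ)

/-- The substitution field automorphism of `K` induced by a permutation
of the variable indices. -/
def liftP (e : Equiv.Perm (ℕ × ℕ)) : K2 ≃+* K2 :=
  IsFractionRing.ringEquivOfRingEquiv (MvPolynomial.renameEquiv F0 e).toRingEquiv

/-- The q-symmetrization over the group of variables `t^a_ℓ`, `lo < ℓ ≤ lo + k`. -/
def symBlock (a lo k : ℕ) (G : K2) : K2 :=
  ∑ σ : Equiv.Perm (Fin k),
    (∏ p ∈ Finset.univ.filter
        (fun p : Fin k × Fin k => p.1 < p.2 ∧ σ p.2 < σ p.1),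
      (q2 * tV a (lo + 1 + (σ p.2 : ℕ)) - q2⁻¹ * tV a (lo + 1 + (σ p.1 : ℕ))) /
        (q2⁻¹ * tV a (lo + 1 + (σ p.2 : ℕ)) - q2 * tV a (lo + 1 + (σ p.1 : ℕ)))) *
      liftP (blockPerm a lo k σ) G

/-- `U(x₁,…,x_k; y₁,…,y_k) = ∏_i (y_i/x_i)/(1−y_i/x_i) ·
∏_{m<n} (q⁻¹ − q·y_m/x_n)/(1 − y_m/x_n)` (for `1`-based families `x y : ℕ → K`). -/
def Ub (x y : ℕ → K2) (k : ℕ) : K2 :=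
  (∏ i ∈ Finset.range k, (y (i + 1) / x (i + 1)) / (1 - y (i + 1) / x (i + 1))) *
    ∏ p ∈ (Finset.range k ×ˢ Finset.range k).filter (fun p => p.1 < p.2),
      (q2⁻¹ - q2 * y (p.1 + 1) / x (p.2 + 1)) / (1 - y (p.1 + 1) / x (p.2 + 1))

/-- The composition of q-symmetrizations
`Sym_{t^{N−k}} ∘ ⋯ ∘ Sym_{t^{N−2}} ∘ Sym_{t^{N−1}}`, each over the full set of
variables `t^a_1,…,t^a_{m_a}` of its type. -/
def iterSym (N : ℕ) (m : ℕ → ℕ) : ℕ → K2 → K2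
  | 0, G => G
  | (k + 1), G => symBlock (N - 1 - k) 0 (m (N - 1 - k)) (iterSym N m k G)

/-- `Y^{(j+1)} = ∏_{a=j+2}^{N−1}
U(t^{a−1}_{m_{a−1}−m_a+1},…,t^{a−1}_{m_{a−1}}; t^a_1,…,t^a_{m_a})`. -/
def Ycur (N j : ℕ) (m : ℕ → ℕ) : K2 :=
  ∏ a ∈ Finset.Icc (j + 2) (N - 1),
    Ub (fun i => tV (a - 1) (m (a - 1) - m a + i)) (fun i => tV a i) (m a)

/-- `U(t^j_{m_j−m_{j+1}+1},…,t^j_{m_j}; t^{j+1}_1,…,t^{j+1}_{m_{j+1}})`. -/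
def Ucross (j : ℕ) (m : ℕ → ℕ) : K2 :=
  Ub (fun i => tV j (m j - m (j + 1) + i)) (fun i => tV (j + 1) i) (m (j + 1))

/-- The composition `Sym_{block_{j+1}} ∘ ⋯ ∘ Sym_{block_{N−1}}` of the
q-symmetrizations over the disjoint blocks
`{t^{j+1}_{m_{j+1}−m_a+1},…,t^{j+1}_{m_{j+1}−m_{a+1}}}`, `a = j+1,…,N−1`,
of type-`(j+1)` variables. -/
def iterBlk (N j : ℕ) (m : ℕ → ℕ) : ℕ → K2 → K2
  | 0, G => G
  | (k + 1), G =>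
      symBlock (j + 1) (m (j + 1) - m (N - 1 - k)) (m (N - 1 - k) - m (N - 1 - k + 1))
        (iterBlk N j m k G)


/-- Permute the second index of type-`a` variables. -/
def shP (a : ℕ) (τ : Equiv.Perm ℕ) : Equiv.Perm (ℕ × ℕ) :=
  Equiv.prodShear (Equiv.refl ℕ) (fun b => if b = a then τ else Equiv.refl ℕ)

def LL (a : ℕ) (τ : Equiv.Perm ℕ) : K2 ≃+* K2 := liftP (shP a τ)

lemma shP_apply (a : ℕ) (τ : Equiv.Perm ℕ) (b l : ℕ) :
    shP a τ (b, l) = (b, if b = a then τ l else l) := by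
  unfold shP
  by_cases h : b = a <;> simp [h]

lemma liftP_alg (e : Equiv.Perm (ℕ × ℕ)) (p : MvPolynomial (ℕ × ℕ) F0) :
    liftP e (algebraMap _ K2 p) = algebraMap _ K2 (rename e p) := by
  unfold liftP
  rw [IsFractionRing.ringEquivOfRingEquiv_algebraMap]
  rfl

lemma liftP_mul (e f : Equiv.Perm (ℕ × ℕ)) (x : K2) :
    liftP (e * f) x = liftP e (liftP f x) := by
  have : (liftP (e * f) : K2 →+* K2) = (liftP e : K2 →+* K2).comp (liftP f : K2 →+* K2) := by
    apply IsLocalization.ringHom_ext (nonZeroDivisors (MvPolynomial (ℕ × ℕ) F0))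
    refine RingHom.ext fun p => ?_
    simp only [RingHom.comp_apply, RingHom.coe_coe, liftP_alg, rename_rename]
    rfl
  exact congrArg (fun g : K2 →+* K2 => g x) this

lemma liftP_one (x : K2) : liftP 1 x = x := by
  have := liftP_mul 1 1 x
  rw [mul_one] at this
  exact ((liftP 1).injective this).symm

lemma liftP_q (e : Equiv.Perm (ℕ × ℕ)) : liftP e q2 = q2 := by
  unfold q2; rw [liftP_alg, rename_C]

lemma liftP_t (e : Equiv.Perm (ℕ × ℕ)) (a l : ℕ) :
    liftP e (tV a l) = tV (e (a, l)).1 (e (a, l)).2 := by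
  unfold tV; rw [liftP_alg, rename_X]

lemma LL_q (a τ) : LL a τ q2 = q2 := liftP_q _

lemma LL_t (a τ) (b l : ℕ) : LL a τ (tV b l) = tV b (if b = a then τ l else l) := by
  unfold LL; rw [liftP_t, shP_apply]

lemma LL_t_same (a τ) (l : ℕ) : LL a τ (tV a l) = tV a (τ l) := by simp [LL_t]

lemma LL_t_ne {a b : ℕ} (h : b ≠ a) (τ) (l : ℕ) : LL a τ (tV b l) = tV b l := by simp [LL_t, h]

lemma LL_mul (a τ τ') (x : K2) : LL a (τ * τ') x = LL a τ (LL a τ' x) := by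
  unfold LL
  rw [← liftP_mul]
  congr 2
  ext ⟨b, l⟩ <;> simp only [Equiv.Perm.mul_apply, shP_apply] <;> split_ifs <;> rfl

lemma LL_one (a) (x : K2) : LL a 1 x = x := by
  unfold LL
  convert liftP_one x using 2
  congr 1
  ext ⟨b, l⟩ <;> simp [shP_apply]

lemma LL_comm {a b : ℕ} (h : a ≠ b) (τ τ') (x : K2) :
    LL a τ (LL b τ' x) = LL b τ' (LL a τ x) := by
  unfold LL
  rw [← liftP_mul, ← liftP_mul]
  congr 2
  ext ⟨c, l⟩ <;> simp only [Equiv.Perm.mul_apply, shP_apply]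
  split_ifs <;> first | rfl | (exfalso; omega)

lemma q2_ne : q2 ≠ 0 := by
  unfold q2
  rw [Ne, IsFractionRing.to_map_eq_zero_iff, C_eq_zero]
  exact RatFunc.X_ne_zero

lemma tV_sub_ne (a : ℕ) {x y : ℕ} (h : x ≠ y) : tV a x - tV a y ≠ 0 := by
  unfold tV
  rw [← map_sub, Ne, IsFractionRing.to_map_eq_zero_iff, sub_eq_zero, X_inj]
  simpa using h

lemma qt_ne_aux {c d : ℕ × ℕ} (h : c ≠ d) :
    tV c.1 c.2 - q2 * q2 * tV d.1 d.2 ≠ 0 := by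
  unfold tV q2
  rw [← map_mul, ← map_mul, ← map_sub, Ne, IsFractionRing.to_map_eq_zero_iff]
  intro h0
  have := congrArg (fun p => MvPolynomial.eval (fun e => if e = c then (1 : F0) else 0) p) h0
  simp [h.symm] at this

lemma qt_ne (a : ℕ) {x y : ℕ} (h : x ≠ y) : q2⁻¹ * tV a x - q2 * tV a y ≠ 0 := by
  have h1 := qt_ne_aux (c := (a, x)) (d := (a, y)) (by simpa using h)
  have hq := q2_ne
  intro h0
  apply h1
  have : q2 * (q2⁻¹ * tV a x - q2 * tV a y) = 0 := by rw [h0, mul_zero]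
  rw [mul_sub, ← mul_assoc, mul_inv_cancel₀ hq, one_mul] at this
  simpa [mul_assoc] using this

def gg (a x y : ℕ) : K2 := (q2⁻¹ * tV a x - q2 * tV a y) / (tV a x - tV a y)

lemma gg_ne (a : ℕ) {x y : ℕ} (h : x ≠ y) : gg a x y ≠ 0 :=
  div_ne_zero (qt_ne a h) (tV_sub_ne a h)

lemma LL_gg (a τ) (x y : ℕ) : LL a τ (gg a x y) = gg a (τ x) (τ y) := by
  simp [gg, LL_q, LL_t_same, map_div₀, map_inv₀]

lemma LL_gg_ne {a b : ℕ} (h : b ≠ a) (τ) (x y : ℕ) : LL a τ (gg b x y) = gg b x y := by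
  simp [gg, LL_q, LL_t_ne h, map_div₀, map_inv₀]

def prs (lo k : ℕ) : Finset (ℕ × ℕ) :=
  ((Finset.Ioc lo (lo + k)) ×ˢ (Finset.Ioc lo (lo + k))).filter (fun p => p.1 < p.2)

lemma mem_prs (lo k : ℕ) (p : ℕ × ℕ) :
    p ∈ prs lo k ↔ lo < p.1 ∧ p.1 < p.2 ∧ p.2 ≤ lo + k := by
  simp only [prs, Finset.mem_filter, Finset.mem_product, Finset.mem_Ioc]; omega

def RT (a : ℕ) (T : Finset (ℕ × ℕ)) : K2 := ∏ p ∈ T, gg a p.1 p.2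

lemma RT_ne (a lo k : ℕ) : RT a (prs lo k) ≠ 0 := by
  unfold RT
  rw [Finset.prod_ne_zero_iff]
  intro p hp
  rw [mem_prs] at hp
  exact gg_ne a (by omega)

lemma RT_inv (a : ℕ) (T : Finset (ℕ × ℕ)) (τ : Equiv.Perm ℕ)
    (h : ∀ p, p ∈ T → (τ p.1, τ p.2) ∈ T) : LL a τ (RT a T) = RT a T := by
  unfold RT
  rw [map_prod]
  simp only [LL_gg]
  have hinj : Set.InjOn (fun p : ℕ × ℕ => (τ p.1, τ p.2)) (T : Set (ℕ × ℕ)) := by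
    rintro ⟨a, b⟩ _ ⟨c, d⟩ _ h; simpa using h
  have himg : T.image (fun p : ℕ × ℕ => (τ p.1, τ p.2)) = T := by
    apply Finset.eq_of_subset_of_card_le
    · intro p hp
      obtain ⟨r, hr, rfl⟩ := Finset.mem_image.1 hp
      exact h r hr
    · rw [Finset.card_image_of_injOn hinj]
  conv_rhs => rw [← himg]
  rw [Finset.prod_image hinj]

lemma RT_ne_type {a b : ℕ} (h : b ≠ a) (T : Finset (ℕ × ℕ)) (τ : Equiv.Perm ℕ) :
    LL a τ (RT b T) = RT b T := by
  unfold RT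
  simp only [map_prod, LL_gg_ne h]

lemma RT_fin (a lo k : ℕ) : RT a (prs lo k) =
    ∏ p ∈ Finset.univ.filter (fun p : Fin k × Fin k => p.1 < p.2),
      gg a (lo + 1 + (p.1 : ℕ)) (lo + 1 + (p.2 : ℕ)) := by
  unfold RT
  symm
  apply Finset.prod_bij (fun p _ => (lo + 1 + (p.1 : ℕ), lo + 1 + (p.2 : ℕ)))
  · rintro ⟨i, j⟩ hp
    have := i.2; have := j.2
    simp only [Finset.mem_filter, Finset.mem_univ, true_and, Fin.lt_def] at hp
    rw [mem_prs]; dsimp only; omega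
  · rintro ⟨i, j⟩ hp ⟨i', j'⟩ hp' h
    simp only [Prod.mk.injEq] at h ⊢
    constructor <;> apply Fin.ext <;> omega
  · rintro ⟨x, y⟩ h
    rw [mem_prs] at h
    dsimp only at h
    refine ⟨(⟨x - (lo + 1), by omega⟩, ⟨y - (lo + 1), by omega⟩), ?_, ?_⟩
    · simp only [Finset.mem_filter, Finset.mem_univ, true_and, Fin.lt_def]; omega
    · simp only [Prod.mk.injEq]; omega
  · intros; rfl

lemma iP_apply (lo k : ℕ) (σ : Equiv.Perm (Fin k)) (i : Fin k) :
    intervalPerm lo k σ (lo + 1 + (i : ℕ)) = lo + 1 + (σ i : ℕ) :=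
  Equiv.Perm.extendDomain_apply_image σ (intervalEquiv lo k) i

lemma iP_out (lo k : ℕ) (σ : Equiv.Perm (Fin k)) {x : ℕ} (h : ¬ (lo + 1 ≤ x ∧ x < lo + 1 + k)) :
    intervalPerm lo k σ x = x :=
  Equiv.Perm.extendDomain_apply_not_subtype σ (intervalEquiv lo k) h

lemma iP_mul (lo k : ℕ) (σ τ : Equiv.Perm (Fin k)) :
    intervalPerm lo k (σ * τ) = intervalPerm lo k σ * intervalPerm lo k τ :=
  (Equiv.Perm.extendDomain_mul _ σ τ).symm

lemma iP_one (lo k : ℕ) : intervalPerm lo k 1 = 1 := Equiv.Perm.extendDomain_one _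

lemma iP_in (lo k : ℕ) (σ : Equiv.Perm (Fin k)) {x : ℕ} (h : lo + 1 ≤ x ∧ x < lo + 1 + k) :
    lo + 1 ≤ intervalPerm lo k σ x ∧ intervalPerm lo k σ x < lo + 1 + k := by
  obtain ⟨i, rfl⟩ : ∃ i : Fin k, x = lo + 1 + (i : ℕ) :=
    ⟨⟨x - (lo + 1), by omega⟩, by simp only; omega⟩
  rw [iP_apply]
  have := (σ i).2
  omega

lemma iP_surj (M : ℕ) (τ : Equiv.Perm ℕ) (h : ∀ x, ¬ (0 + 1 ≤ x ∧ x < 0 + 1 + M) → τ x = x) :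
    ∃ ρ, intervalPerm 0 M ρ = τ := by
  have hp : ∀ x, (0 + 1 ≤ τ x ∧ τ x < 0 + 1 + M) ↔ (0 + 1 ≤ x ∧ x < 0 + 1 + M) := by
    intro x
    constructor
    · intro hx
      by_contra hc
      rw [h x hc] at hx
      exact hc hx
    · intro hx
      by_contra hc
      have := τ.injective (h _ hc)
      rw [this] at hc
      exact hc hx
  refine ⟨(intervalEquiv 0 M).symm.permCongr (τ.subtypePerm hp), ?_⟩
  ext x
  by_cases hx : 0 + 1 ≤ x ∧ x < 0 + 1 + M
  · obtain ⟨i, rfl⟩ : ∃ i : Fin M, x = 0 + 1 + (i : ℕ) :=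
      ⟨⟨x - (0 + 1), by omega⟩, by simp only; omega⟩
    rw [iP_apply]
    have h1 : (((intervalEquiv 0 M) (((intervalEquiv 0 M).symm.permCongr (τ.subtypePerm hp)) i) :
      {x : ℕ // 0 + 1 ≤ x ∧ x < 0 + 1 + M}) : ℕ) = τ (0 + 1 + (i : ℕ)) := by
      simp [Equiv.permCongr_apply]
      rfl
    exact h1
  · rw [iP_out _ _ _ hx, h x hx]

lemma h_sym_prod {M : Type*} [CommMonoid M] (k : ℕ) (σ : Equiv.Perm (Fin k))
    (h : Fin k → Fin k → M) (hs : ∀ i j, h i j = h j i) :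
    ∏ p ∈ Finset.univ.filter (fun p : Fin k × Fin k => p.1 < p.2), h (σ p.1) (σ p.2) =
    ∏ p ∈ Finset.univ.filter (fun p : Fin k × Fin k => p.1 < p.2), h p.1 p.2 := by
  apply Finset.prod_bij'
    (fun p _ => if σ p.1 < σ p.2 then (σ p.1, σ p.2) else (σ p.2, σ p.1))
    (fun p _ => if σ⁻¹ p.1 < σ⁻¹ p.2 then (σ⁻¹ p.1, σ⁻¹ p.2) else (σ⁻¹ p.2, σ⁻¹ p.1))
  · rintro ⟨i, j⟩ hp
    simp only [Finset.mem_filter, Finset.mem_univ, true_and] at hp ⊢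
    have : σ i ≠ σ j := fun h => hp.ne (σ.injective h)
    split_ifs with hc
    · exact hc
    · exact lt_of_le_of_ne (not_lt.1 hc) this.symm
  · rintro ⟨i, j⟩ hp
    simp only [Finset.mem_filter, Finset.mem_univ, true_and] at hp ⊢
    have : σ⁻¹ i ≠ σ⁻¹ j := fun h => hp.ne (σ⁻¹.injective h)
    split_ifs with hc
    · exact hc
    · exact lt_of_le_of_ne (not_lt.1 hc) this.symm
  · rintro ⟨i, j⟩ hp
    simp only [Finset.mem_filter, Finset.mem_univ, true_and] at hp ⊢
    by_cases hc : σ i < σ j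
    · simp [hc, hp]
    · simp [hc, hp.le]
  · rintro ⟨i, j⟩ hp
    simp only [Finset.mem_filter, Finset.mem_univ, true_and] at hp ⊢
    by_cases hc : σ⁻¹ i < σ⁻¹ j
    · rw [if_pos hc]; simp [hp]
    · rw [if_neg hc]; simp [hp.le]
  · rintro ⟨i, j⟩ hp
    dsimp only
    split_ifs
    · rfl
    · exact hs _ _

lemma gg_flip (a : ℕ) {x y : ℕ} (h : x ≠ y) :
    gg a x y = gg a y x * ((q2 * tV a y - q2⁻¹ * tV a x) / (q2⁻¹ * tV a y - q2 * tV a x)) := by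
  have h1 := qt_ne a h.symm
  have h2 := tV_sub_ne a h
  have h3 := tV_sub_ne a h.symm
  unfold gg
  rw [div_mul_div_comm, div_eq_div_iff h2 (mul_ne_zero h3 h1)]
  ring

lemma wt_eq (a lo k : ℕ) (σ : Equiv.Perm (Fin k)) :
    RT a (prs lo k) * (∏ p ∈ Finset.univ.filter
        (fun p : Fin k × Fin k => p.1 < p.2 ∧ σ p.2 < σ p.1),
      (q2 * tV a (lo + 1 + (σ p.2 : ℕ)) - q2⁻¹ * tV a (lo + 1 + (σ p.1 : ℕ))) /
        (q2⁻¹ * tV a (lo + 1 + (σ p.2 : ℕ)) - q2 * tV a (lo + 1 + (σ p.1 : ℕ)))) =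
    LL a (intervalPerm lo k σ) (RT a (prs lo k)) := by
  rw [RT_fin, map_prod]
  simp only [LL_gg, iP_apply]
  have h0 : ∏ p ∈ Finset.univ.filter (fun p : Fin k × Fin k => p.1 < p.2),
      gg a (lo + 1 + (p.1 : ℕ)) (lo + 1 + (p.2 : ℕ)) =
      ∏ p ∈ Finset.univ.filter (fun p : Fin k × Fin k => p.1 < p.2),
      (fun i j : Fin k => if i < j then gg a (lo + 1 + (i : ℕ)) (lo + 1 + (j : ℕ))
        else gg a (lo + 1 + (j : ℕ)) (lo + 1 + (i : ℕ))) p.1 p.2 := by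
    apply Finset.prod_congr rfl
    rintro ⟨i, j⟩ hp
    simp only [Finset.mem_filter, Finset.mem_univ, true_and] at hp ⊢
    rw [if_pos hp]
  rw [h0, ← h_sym_prod k σ
    (fun i j : Fin k => if i < j then gg a (lo + 1 + (i : ℕ)) (lo + 1 + (j : ℕ))
        else gg a (lo + 1 + (j : ℕ)) (lo + 1 + (i : ℕ))), ← Finset.filter_filter,
    Finset.prod_filter (fun p : Fin k × Fin k => σ p.2 < σ p.1),
    ← Finset.prod_mul_distrib]
  · apply Finset.prod_congr rfl
    rintro ⟨i, j⟩ hp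
    simp only [Finset.mem_filter, Finset.mem_univ, true_and] at hp ⊢
    have hne : σ i ≠ σ j := fun h => hp.ne (σ.injective h)
    by_cases hc : σ i < σ j
    · rw [if_pos hc, if_neg hc.asymm, mul_one]
    · have hd : σ j < σ i := lt_of_le_of_ne (not_lt.1 hc) hne.symm
      rw [if_neg hc, if_pos hd]
      refine (gg_flip a ?_).symm
      intro h; apply hne; apply Fin.ext; omega
  · intro i j
    rcases lt_trichotomy i j with h | h | h
    · rw [if_pos h, if_neg h.asymm]
    · rw [h]
    · rw [if_neg h.asymm, if_pos h]

lemma symBlock_eq (a lo k : ℕ) (G : K2) :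
    symBlock a lo k G = (RT a (prs lo k))⁻¹ *
      ∑ σ : Equiv.Perm (Fin k), LL a (intervalPerm lo k σ) (RT a (prs lo k) * G) := by
  unfold symBlock
  rw [Finset.mul_sum]
  apply Finset.sum_congr rfl
  intro σ _
  rw [map_mul, ← wt_eq, mul_assoc, inv_mul_cancel_left₀ (RT_ne a lo k)]
  rfl

lemma S_inv (a M : ℕ) (τ : Equiv.Perm ℕ) (h : ∀ x, ¬ (0 + 1 ≤ x ∧ x < 0 + 1 + M) → τ x = x)
    (X : K2) :
    ∑ σ : Equiv.Perm (Fin M), LL a (intervalPerm 0 M σ) (LL a τ X) =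
    ∑ σ : Equiv.Perm (Fin M), LL a (intervalPerm 0 M σ) X := by
  obtain ⟨ρ, rfl⟩ := iP_surj M τ h
  simp only [← LL_mul, ← iP_mul]
  exact Fintype.sum_equiv (Equiv.mulRight ρ) _ _ (fun σ => rfl)

lemma symBlock_mul (a lo k : ℕ) (W G : K2)
    (hW : ∀ σ, LL a (intervalPerm lo k σ) W = W) :
    symBlock a lo k (W * G) = W * symBlock a lo k G := by
  simp only [symBlock_eq, map_mul, hW, Finset.mul_sum]
  apply Finset.sum_congr rfl
  intro σ _; ring

lemma RT_split (a lo k M : ℕ) (h : lo + k ≤ M) (σ : Equiv.Perm (Fin k)) :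
    LL a (intervalPerm lo k σ) (RT a (prs 0 M) / RT a (prs lo k)) =
      RT a (prs 0 M) / RT a (prs lo k) := by
  have hsub : prs lo k ⊆ prs 0 M := by
    intro p hp
    rw [mem_prs] at hp ⊢; omega
  have h1 : RT a (prs 0 M) / RT a (prs lo k) = RT a (prs 0 M \ prs lo k) := by
    rw [div_eq_iff (RT_ne a lo k)]
    unfold RT
    rw [Finset.prod_sdiff hsub]
  rw [h1]
  apply RT_inv
  rintro ⟨x, y⟩ hp
  rw [Finset.mem_sdiff, mem_prs, mem_prs] at hp ⊢
  dsimp only at hp ⊢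
  have key : ∀ z, (intervalPerm lo k σ z = z ∧ ¬ (lo + 1 ≤ z ∧ z < lo + 1 + k)) ∨
      ((lo + 1 ≤ z ∧ z < lo + 1 + k) ∧
        lo + 1 ≤ intervalPerm lo k σ z ∧ intervalPerm lo k σ z < lo + 1 + k) := by
    intro z
    by_cases hz : lo + 1 ≤ z ∧ z < lo + 1 + k
    · exact Or.inr ⟨hz, iP_in lo k σ hz⟩
    · exact Or.inl ⟨iP_out lo k σ hz, hz⟩
  have kx := key x
  have ky := key y
  omega

lemma sym_sym (a lo k M : ℕ) (h : lo + k ≤ M) (W G : K2)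
    (hW : ∀ σ, LL a (intervalPerm lo k σ) W = W) :
    symBlock a 0 M (W * symBlock a lo k G) = (k.factorial : K2) * symBlock a 0 M (W * G) := by
  rw [symBlock_eq a 0 M, symBlock_eq a 0 M]
  have h1 : RT a (prs 0 M) * (W * symBlock a lo k G) =
      ∑ τ : Equiv.Perm (Fin k), LL a (intervalPerm lo k τ) (RT a (prs 0 M) * (W * G)) := by
    rw [symBlock_eq, Finset.mul_sum, Finset.mul_sum, Finset.mul_sum]
    apply Finset.sum_congr rfl
    intro τ _
    have h2 : RT a (prs 0 M) * (W * G) =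
        (RT a (prs 0 M) / RT a (prs lo k)) * W * (RT a (prs lo k) * G) := by
      have := RT_ne a lo k
      field_simp
    rw [h2]
    simp only [map_mul]
    rw [RT_split a lo k M h, hW]
    rw [div_eq_mul_inv]; ring
  rw [h1]
  simp only [map_sum (LL a _)]
  rw [Finset.sum_comm]
  have h3 : ∀ τ : Equiv.Perm (Fin k), ∑ σ : Equiv.Perm (Fin M), LL a (intervalPerm 0 M σ)
      (LL a (intervalPerm lo k τ) (RT a (prs 0 M) * (W * G))) =
      ∑ σ : Equiv.Perm (Fin M), LL a (intervalPerm 0 M σ) (RT a (prs 0 M) * (W * G)) := by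
    intro τ
    apply S_inv
    intro x hx
    apply iP_out
    omega
  rw [Finset.sum_congr rfl (fun τ _ => h3 τ), Finset.sum_const, Finset.card_univ,
    Fintype.card_perm, Fintype.card_fin, nsmul_eq_mul]
  ring

instance K2_charZero : CharZero K2 := by
  have : CharZero F0 := charZero_of_injective_algebraMap (algebraMap ℂ F0).injective
  have h2 : CharZero (MvPolynomial (ℕ × ℕ) F0) :=
    charZero_of_injective_algebraMap (MvPolynomial.C_injective (ℕ × ℕ) F0)
  exact charZero_of_injective_algebraMap
    (IsFractionRing.injective (MvPolynomial (ℕ × ℕ) F0) K2)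

lemma tV_ne (a x : ℕ) : tV a x ≠ 0 := by
  unfold tV
  rw [Ne, IsFractionRing.to_map_eq_zero_iff]
  exact X_ne_zero _

lemma tV_sub_ne' {a b : ℕ} (h : a ≠ b) (x y : ℕ) : tV a x - tV b y ≠ 0 := by
  unfold tV
  rw [← map_sub, Ne, IsFractionRing.to_map_eq_zero_iff, sub_eq_zero, X_inj]
  intro h'
  exact h (congrArg Prod.fst h')

lemma map_Ub (c : ℕ) (τ) (x y : ℕ → K2) (k : ℕ) :
    LL c τ (Ub x y k) = Ub (fun i => LL c τ (x i)) (fun i => LL c τ (y i)) k := by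
  simp only [Ub, map_mul, map_prod, map_div₀, map_sub, map_one, map_inv₀, LL_q]

def dU (x y : K2) : K2 := (y / x) / (1 - y / x)
def cU (x y : K2) : K2 := (q2⁻¹ - q2 * y / x) / (1 - y / x)

def Ures (x y : ℕ → K2) (k i : ℕ) : K2 :=
  (∏ l ∈ ((Finset.range k).erase i).erase (i + 1), dU (x (l + 1)) (y (l + 1))) *
  ∏ p ∈ ((Finset.range k ×ˢ Finset.range k).filter (fun p => p.1 < p.2)).erase (i, i + 1),
    cU (x (p.2 + 1)) (y (p.1 + 1))

def uU (x1 x2 y1 y2 : K2) : K2 := dU x1 y1 * dU x2 y2 * cU x2 y1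

lemma Ub_split (x y : ℕ → K2) (k i : ℕ) (h : i + 1 < k) :
    Ub x y k = Ures x y k i * uU (x (i + 1)) (x (i + 2)) (y (i + 1)) (y (i + 2)) := by
  have h1 : i ∈ Finset.range k := by simp; omega
  have h2 : i + 1 ∈ (Finset.range k).erase i := by simp; omega
  have h3 : (i, i + 1) ∈ (Finset.range k ×ˢ Finset.range k).filter (fun p : ℕ × ℕ => p.1 < p.2) := by
    simp; omega
  have e1 : Ub x y k = (∏ l ∈ Finset.range k, dU (x (l + 1)) (y (l + 1))) *
    ∏ p ∈ (Finset.range k ×ˢ Finset.range k).filter (fun p => p.1 < p.2),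
      cU (x (p.2 + 1)) (y (p.1 + 1)) := rfl
  rw [e1, ← Finset.mul_prod_erase _ _ h1, ← Finset.mul_prod_erase _ _ h2,
    ← Finset.mul_prod_erase _ _ h3, Ures, uU]
  ring

lemma Ures_x (x y : ℕ → K2) (k i : ℕ) (h : i + 1 < k) :
    Ures (fun l => x (Equiv.swap (i + 1) (i + 2) l)) y k i = Ures x y k i := by
  unfold Ures
  congr 1
  · apply Finset.prod_congr rfl
    intro l hl
    simp only [Finset.mem_erase, Finset.mem_range] at hl
    have hs : Equiv.swap (i + 1) (i + 2) (l + 1) = l + 1 :=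
      Equiv.swap_apply_of_ne_of_ne (by omega) (by omega)
    simp only [hs]
  · apply Finset.prod_equiv (Equiv.prodCongr (Equiv.refl ℕ) (Equiv.swap i (i + 1)))
    · rintro ⟨m, n⟩
      simp only [Finset.mem_erase, Finset.mem_filter, Finset.mem_product, Finset.mem_range,
        Equiv.prodCongr_apply, Prod.map_apply, Equiv.refl_apply, Equiv.swap_apply_def, ne_eq,
        Prod.mk.injEq]
      split_ifs <;> omega
    · rintro ⟨m, n⟩ _
      simp only [Equiv.prodCongr_apply, Prod.map_apply, Equiv.refl_apply, Equiv.swap_apply_def]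
      congr 2
      split_ifs <;> omega

lemma Ures_y (x y : ℕ → K2) (k i : ℕ) (h : i + 1 < k) :
    Ures x (fun l => y (Equiv.swap (i + 1) (i + 2) l)) k i = Ures x y k i := by
  unfold Ures
  congr 1
  · apply Finset.prod_congr rfl
    intro l hl
    simp only [Finset.mem_erase, Finset.mem_range] at hl
    have hs : Equiv.swap (i + 1) (i + 2) (l + 1) = l + 1 :=
      Equiv.swap_apply_of_ne_of_ne (by omega) (by omega)
    simp only [hs]
  · apply Finset.prod_equiv (Equiv.prodCongr (Equiv.swap i (i + 1)) (Equiv.refl ℕ))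
    · rintro ⟨m, n⟩
      simp only [Finset.mem_erase, Finset.mem_filter, Finset.mem_product, Finset.mem_range,
        Equiv.prodCongr_apply, Prod.map_apply, Equiv.refl_apply, Equiv.swap_apply_def, ne_eq,
        Prod.mk.injEq]
      split_ifs <;> omega
    · rintro ⟨m, n⟩ _
      simp only [Equiv.prodCongr_apply, Prod.map_apply, Equiv.refl_apply, Equiv.swap_apply_def]
      congr 2
      split_ifs <;> omega

lemma core_id (q x1 x2 y1 y2 : K2) (hq : q ≠ 0)
    (h11 : x1 - y1 ≠ 0) (h12 : x1 - y2 ≠ 0) (h21 : x2 - y1 ≠ 0) (h22 : x2 - y2 ≠ 0)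
    (hy : y1 - y2 ≠ 0) :
    (q⁻¹ * y2 - q * y1) / (y2 - y1) *
      (y2 / (x1 - y2) * (y1 / (x2 - y1)) * ((q⁻¹ * x2 - q * y2) / (x2 - y2)) -
       y2 / (x2 - y2) * (y1 / (x1 - y1)) * ((q⁻¹ * x1 - q * y2) / (x1 - y2))) =
    - ((q⁻¹ * y1 - q * y2) / (y1 - y2) *
      (y1 / (x1 - y1) * (y2 / (x2 - y2)) * ((q⁻¹ * x2 - q * y1) / (x2 - y1)) -
       y1 / (x2 - y1) * (y2 / (x1 - y2)) * ((q⁻¹ * x1 - q * y1) / (x1 - y1)))) := by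
  have hy' : y2 - y1 ≠ 0 := by
    intro h; apply hy; rw [← neg_sub, h, neg_zero]
  have e : y2 - y1 = -(y1 - y2) := by ring
  rw [e]
  field_simp
  ring

lemma dU_eq {x y : K2} (hx : x ≠ 0) : dU x y = y / (x - y) := by
  unfold dU
  rw [← div_self hx, ← sub_div, div_div_div_cancel_right₀ hx]

lemma cU_eq {x y : K2} (hx : x ≠ 0) : cU x y = (q2⁻¹ * x - q2 * y) / (x - y) := by
  unfold cU
  have h1 : q2⁻¹ - q2 * y / x = (q2⁻¹ * x - q2 * y) / x := by
    rw [sub_div, mul_div_cancel_right₀ _ hx]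
  rw [h1, ← div_self hx, ← sub_div, div_div_div_cancel_right₀ hx]

lemma core_U (b d M i : ℕ) (h : i + 1 < M) (U : K2)
    (hU : U = Ub (fun l => tV b (d + l)) (fun l => tV (b + 1) l) M) :
    LL (b + 1) (Equiv.swap (i + 1) (i + 2)) (RT (b + 1) (prs 0 M) *
      (U - LL b (Equiv.swap (d + (i + 1)) (d + (i + 2))) U)) =
    - (RT (b + 1) (prs 0 M) *
      (U - LL b (Equiv.swap (d + (i + 1)) (d + (i + 2))) U)) := by
  have hb : b ≠ b + 1 := by omega
  have hx : ∀ l, tV b (Equiv.swap (d + (i + 1)) (d + (i + 2)) (d + l)) =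
      (fun l => tV b (d + l)) (Equiv.swap (i + 1) (i + 2) l) := by
    intro l
    dsimp only
    congr 1
    simp only [Equiv.swap_apply_def]
    split_ifs <;> omega
  have eU : LL b (Equiv.swap (d + (i + 1)) (d + (i + 2))) U =
      Ures (fun l => tV b (d + l)) (fun l => tV (b + 1) l) M i *
      uU (tV b (d + (i + 2))) (tV b (d + (i + 1))) (tV (b + 1) (i + 1)) (tV (b + 1) (i + 2)) := by
    rw [hU, map_Ub]
    simp only [LL_t_same, LL_t_ne hb.symm, hx]
    rw [Ub_split _ _ _ _ h, Ures_x (fun l => tV b (d + l)) _ _ _ h]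
    simp only [Equiv.swap_apply_left, Equiv.swap_apply_right]
  have sA : LL (b + 1) (Equiv.swap (i + 1) (i + 2))
      (Ures (fun l => tV b (d + l)) (fun l => tV (b + 1) l) M i) =
      Ures (fun l => tV b (d + l)) (fun l => tV (b + 1) l) M i := by
    conv_rhs => rw [← Ures_y _ _ _ _ h]
    simp only [Ures, dU, cU, map_mul, map_prod, map_div₀, map_sub, map_one, map_inv₀, LL_q,
      LL_t_same, LL_t_ne hb]
  have hmem : ((i + 1, i + 2) : ℕ × ℕ) ∈ prs 0 M := by rw [mem_prs]; dsimp only; omega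
  have hR : RT (b + 1) (prs 0 M) =
      gg (b + 1) (i + 1) (i + 2) * RT (b + 1) ((prs 0 M).erase (i + 1, i + 2)) := by
    unfold RT
    rw [← Finset.mul_prod_erase _ _ hmem]
  have hB : LL (b + 1) (Equiv.swap (i + 1) (i + 2)) (RT (b + 1) ((prs 0 M).erase (i + 1, i + 2))) =
      RT (b + 1) ((prs 0 M).erase (i + 1, i + 2)) := by
    apply RT_inv
    rintro ⟨m, n⟩ hp
    simp only [Finset.mem_erase, mem_prs, ne_eq, Prod.mk.injEq, Equiv.swap_apply_def] at hp ⊢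
    split_ifs <;> omega
  rw [eU, hR]
  have hU' := Ub_split (fun l => tV b (d + l)) (fun l => tV (b + 1) l) M i h
  rw [← hU] at hU'
  rw [hU']
  generalize Ures (fun l => tV b (d + l)) (fun l => tV (b + 1) l) M i = A at *
  generalize RT (b + 1) ((prs 0 M).erase (i + 1, i + 2)) = B at *
  have hu : ∀ m n m' n', LL (b + 1) (Equiv.swap (i + 1) (i + 2))
      (uU (tV b m) (tV b n) (tV (b + 1) m') (tV (b + 1) n')) =
      uU (tV b m) (tV b n) (tV (b + 1) (Equiv.swap (i + 1) (i + 2) m'))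
        (tV (b + 1) (Equiv.swap (i + 1) (i + 2) n')) := by
    intro m n m' n'
    simp only [uU, dU, cU, map_mul, map_div₀, map_sub, map_one, map_inv₀, LL_q,
      LL_t_same, LL_t_ne hb]
  rw [map_mul, map_mul, map_sub, map_mul, map_mul, hB, sA, hu, hu, LL_gg]
  simp only [Equiv.swap_apply_left, Equiv.swap_apply_right]
  have := core_id q2 (tV b (d + (i + 1))) (tV b (d + (i + 2))) (tV (b + 1) (i + 1))
    (tV (b + 1) (i + 2)) q2_ne (tV_sub_ne' hb _ _) (tV_sub_ne' hb _ _) (tV_sub_ne' hb _ _)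
    (tV_sub_ne' hb _ _) (tV_sub_ne _ (by omega))
  simp only [uU, dU_eq (tV_ne _ _), cU_eq (tV_ne _ _), gg]
  linear_combination (A * B) * this

lemma LL_sym {a c : ℕ} (h : c ≠ a) (τ) (lo k : ℕ) (G : K2) :
    LL c τ (symBlock a lo k G) = symBlock a lo k (LL c τ G) := by
  simp only [symBlock_eq, map_mul, map_sum, map_inv₀, RT_ne_type h.symm, LL_comm h]

lemma LL_iter (N : ℕ) (m : ℕ → ℕ) (n c : ℕ) (hc : c + n + 1 ≤ N) (τ) (G : K2) :
    LL c τ (iterSym N m n G) = iterSym N m n (LL c τ G) := by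
  induction n with
  | zero => rfl
  | succ n ih =>
    simp only [iterSym]
    rw [LL_sym (by omega), ih (by omega)]

lemma iterSym_mul (N : ℕ) (m : ℕ → ℕ) (n : ℕ) (W G : K2) (hn : n ≤ N)
    (hW : ∀ c τ, N ≤ c + n → LL c τ W = W) :
    iterSym N m n (W * G) = W * iterSym N m n G := by
  induction n with
  | zero => rfl
  | succ n ih =>
    simp only [iterSym]
    rw [ih (by omega) (fun c τ h => hW c τ (by omega)), symBlock_mul]
    intro σ
    exact hW _ _ (by omega)

def ZZ (N b : ℕ) (m : ℕ → ℕ) : K2 :=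
  ∏ a ∈ Finset.Icc (b + 1) (N - 1),
    Ub (fun i => tV (a - 1) (m (a - 1) - m a + i)) (fun i => tV a i) (m a)

lemma ZZ_succ (N b : ℕ) (m : ℕ → ℕ) (h : b + 1 ≤ N - 1) :
    ZZ N b m = Ucross b m * ZZ N (b + 1) m := by
  unfold ZZ
  have : Finset.Icc (b + 1) (N - 1) = insert (b + 1) (Finset.Icc (b + 1 + 1) (N - 1)) := by
    ext x; simp only [Finset.mem_Icc, Finset.mem_insert]; omega
  rw [this, Finset.prod_insert (by simp)]
  rfl

lemma ZZ_indep (N b c : ℕ) (m : ℕ → ℕ) (h : c < b) (τ) : LL c τ (ZZ N b m) = ZZ N b m := by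
  unfold ZZ
  rw [map_prod]
  apply Finset.prod_congr rfl
  intro a ha
  rw [Finset.mem_Icc] at ha
  rw [map_Ub]
  have h1 : a - 1 ≠ c := by omega
  have h2 : a ≠ c := by omega
  simp only [LL_t_ne h1, LL_t_ne h2]

lemma Ucross_indep (b c : ℕ) (m : ℕ → ℕ) (h1 : b ≠ c) (h2 : b + 1 ≠ c) (τ) :
    LL c τ (Ucross b m) = Ucross b m := by
  unfold Ucross
  rw [map_Ub]
  simp only [LL_t_ne h1, LL_t_ne h2]

lemma Ub_congr (x x' y : ℕ → K2) (k : ℕ) (h : ∀ l, x (l + 1) = x' (l + 1)) :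
    Ub x y k = Ub x' y k := by
  simp only [Ub, h]

lemma V_succ (N b n : ℕ) (m : ℕ → ℕ) (h : b + (n + 1) = N - 1) :
    iterSym N m (n + 1) (ZZ N b m) =
      symBlock (b + 1) 0 (m (b + 1)) (Ucross b m * iterSym N m n (ZZ N (b + 1) m)) := by
  rw [ZZ_succ N b m (by omega)]
  simp only [iterSym]
  have : N - 1 - n = b + 1 := by omega
  rw [this, iterSym_mul N m n _ _ (by omega)]
  intro c τ hc
  exact Ucross_indep _ _ _ (by omega) (by omega) _

lemma V_swap (N j : ℕ) (m : ℕ → ℕ)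
    (hmono : ∀ a c, j ≤ a → a ≤ c → c ≤ N → m c ≤ m a) :
    ∀ n b, b + n = N - 1 → j ≤ b → ∀ i a, b ≤ a → a + 1 ≤ N → m b - m a + 1 ≤ i →
      i + 1 ≤ m b - m (a + 1) →
      LL b (Equiv.swap i (i + 1)) (iterSym N m n (ZZ N b m)) = iterSym N m n (ZZ N b m) := by
  intro n
  induction n with
  | zero =>
    intro b hb hj i a _ _ _ _
    have : ZZ N b m = 1 := by
      unfold ZZ
      rw [Finset.Icc_eq_empty (by omega), Finset.prod_empty]
    simp only [iterSym, this, map_one]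
  | succ n ih =>
    intro b hb hj i a hba haN h1 h2
    have hM := hmono b (b + 1) hj (by omega) (by omega)
    rw [V_succ N b n m hb]
    have hV : LL b (Equiv.swap i (i + 1)) (iterSym N m n (ZZ N (b + 1) m)) =
        iterSym N m n (ZZ N (b + 1) m) := by
      rw [LL_iter N m n b (by omega), ZZ_indep N _ _ _ (by omega)]
    rw [LL_sym (by omega), map_mul, hV]
    rcases Nat.eq_or_lt_of_le hba with rfl | hlt
    · congr 2
      unfold Ucross
      rw [map_Ub]
      have hb1 : b + 1 ≠ b := by omega
      simp only [LL_t_same, LL_t_ne hb1]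
      apply Ub_congr
      intro l
      rw [Equiv.swap_apply_of_ne_of_ne (by omega) (by omega)]
    · have hma := hmono (b + 1) a (by omega) (by omega) (by omega)
      have hma1 := hmono a (a + 1) (by omega) (by omega) (by omega)
      obtain ⟨i0, rfl⟩ : ∃ i0, i = (m b - m (b + 1)) + (i0 + 1) :=
        ⟨i - (m b - m (b + 1)) - 1, by omega⟩
      have hs := ih (b + 1) (by omega) (by omega) (i0 + 1) a (by omega) haN (by omega) (by omega)
      have hc := core_U b (m b - m (b + 1)) (m (b + 1)) i0 (by omega) (Ucross b m) rfl
      set V := iterSym N m n (ZZ N (b + 1) m) with hVdef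
      set U := Ucross b m with hUdef
      set U' := LL b (Equiv.swap (m b - m (b + 1) + (i0 + 1)) (m b - m (b + 1) + (i0 + 1) + 1)) U
        with hU'
      have hc' : LL (b + 1) (Equiv.swap (i0 + 1) (i0 + 1 + 1)) (RT (b + 1) (prs 0 (m (b + 1))) *
          (U - U')) = - (RT (b + 1) (prs 0 (m (b + 1))) * (U - U')) := hc
      have hinv := S_inv (b + 1) (m (b + 1)) (Equiv.swap (i0 + 1) (i0 + 1 + 1))
        (by intro x hx; exact Equiv.swap_apply_of_ne_of_ne (by omega) (by omega))
        (RT (b + 1) (prs 0 (m (b + 1))) * (U - U') * V)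
      rw [map_mul, hc', hs, neg_mul] at hinv
      simp only [map_neg, Finset.sum_neg_distrib] at hinv
      have h0 := neg_eq_self.1 hinv
      rw [symBlock_eq, symBlock_eq]
      congr 1
      rw [eq_comm, ← sub_eq_zero, ← h0, ← Finset.sum_sub_distrib]
      apply Finset.sum_congr rfl
      intro σ _
      rw [← map_sub]
      congr 1
      ring

lemma iP_swap (lo k : ℕ) (i : Fin k) :
    intervalPerm lo (k + 1) (Equiv.swap i.castSucc i.succ) =
      Equiv.swap (lo + 1 + (i : ℕ)) (lo + 1 + (i : ℕ) + 1) := by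
  ext x
  by_cases hx : lo + 1 ≤ x ∧ x < lo + 1 + (k + 1)
  · obtain ⟨l, rfl⟩ : ∃ l : Fin (k + 1), x = lo + 1 + (l : ℕ) :=
      ⟨⟨x - (lo + 1), by omega⟩, by simp only; omega⟩
    rw [iP_apply]
    simp only [Equiv.swap_apply_def, Fin.ext_iff, Fin.val_castSucc, Fin.val_succ]
    split_ifs <;> (try simp only [Fin.val_castSucc, Fin.val_succ]) <;> omega
  · rw [iP_out _ _ _ hx, Equiv.swap_apply_of_ne_of_ne] <;> have := i.2 <;> omega

lemma blk_inv (b lo k : ℕ) (V : K2)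
    (h : ∀ i, lo + 1 ≤ i → i + 1 ≤ lo + k → LL b (Equiv.swap i (i + 1)) V = V)
    (σ : Equiv.Perm (Fin k)) : LL b (intervalPerm lo k σ) V = V := by
  cases k with
  | zero =>
    rw [Subsingleton.elim σ 1, iP_one, LL_one]
  | succ k =>
    have hσ : σ ∈ Submonoid.closure (Set.range fun i : Fin k ↦ Equiv.swap i.castSucc i.succ) := by
      rw [Equiv.Perm.mclosure_swap_castSucc_succ]; trivial
    induction hσ using Submonoid.closure_induction with
    | mem x hx =>
      obtain ⟨i, rfl⟩ := hx
      dsimp only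
      rw [iP_swap]
      have := i.2
      exact h _ (by omega) (by omega)
    | one => rw [iP_one, LL_one]
    | mul x y _ _ hx hy => rw [iP_mul, LL_mul, hy, hx]

lemma iterBlk_eq (N j : ℕ) (m : ℕ → ℕ) (W G : K2)
    (hmono : ∀ a c, j ≤ a → a ≤ c → c ≤ N → m c ≤ m a)
    (hW : ∀ a, j + 1 ≤ a → a + 1 ≤ N → ∀ σ,
      LL (j + 1) (intervalPerm (m (j + 1) - m a) (m a - m (a + 1)) σ) W = W) :
    ∀ n, n + j + 1 ≤ N → symBlock (j + 1) 0 (m (j + 1)) (W * iterBlk N j m n G) =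
      ((∏ k ∈ Finset.range n, (m (N - 1 - k) - m (N - 1 - k + 1)).factorial : ℕ) : K2) *
        symBlock (j + 1) 0 (m (j + 1)) (W * G) := by
  intro n
  induction n with
  | zero => intro _; simp [iterBlk]
  | succ n ih =>
    intro hn
    simp only [iterBlk]
    have h1 := hmono (j + 1) (N - 1 - n) (by omega) (by omega) (by omega)
    have h2 := hmono (N - 1 - n) (N - 1 - n + 1) (by omega) (by omega) (by omega)
    rw [sym_sym _ _ _ _ (by omega) _ _ (hW _ (by omega) (by omega)), ih (by omega),
      Finset.prod_range_succ]
    push_cast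
    ring

theorem statement11 (N j : ℕ) (m : ℕ → ℕ) (hj : 1 ≤ j) (hjN : j + 2 ≤ N)
    (hmono : ∀ a, j ≤ a → a < N → m (a + 1) ≤ m a) (hmN : m N = 0) :
    symBlock (j + 1) 0 (m (j + 1))
        (iterSym N m (N - 2 - j) (Ycur N j m) * iterBlk N j m (N - 1 - j) (Ucross j m)) =
      ((∏ a ∈ Finset.Icc (j + 1) (N - 1), (m a - m (a + 1)).factorial : ℕ) : K2) *
        iterSym N m (N - 1 - j) (Ucross j m * Ycur N j m) := by
  have hmono' : ∀ a c, j ≤ a → a ≤ c → c ≤ N → m c ≤ m a := by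
    intro a c ha hac hc
    induction c, hac using Nat.le_induction with
    | base => exact le_rfl
    | succ c hac ih => exact (hmono c (by omega) (by omega)).trans (ih (by omega))
  have hY : Ycur N j m = ZZ N (j + 1) m := rfl
  rw [hY]
  have hW : ∀ a, j + 1 ≤ a → a + 1 ≤ N → ∀ σ,
      LL (j + 1) (intervalPerm (m (j + 1) - m a) (m a - m (a + 1)) σ)
        (iterSym N m (N - 2 - j) (ZZ N (j + 1) m)) =
        iterSym N m (N - 2 - j) (ZZ N (j + 1) m) := by
    intro a ha haN σ
    apply blk_inv
    intro i hi1 hi2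
    have h1 := hmono' (j + 1) a (by omega) (by omega) (by omega)
    have h2 := hmono' a (a + 1) (by omega) (by omega) (by omega)
    exact V_swap N j m hmono' (N - 2 - j) (j + 1) (by omega) (by omega) i a ha haN
      (by omega) (by omega)
  rw [iterBlk_eq N j m _ _ hmono' hW (N - 1 - j) (by omega)]
  congr 1
  · congr 1
    apply Finset.prod_bij' (fun k _ => N - 1 - k) (fun a _ => N - 1 - a)
    · intro k hk; rw [Finset.mem_range] at hk; rw [Finset.mem_Icc]; omega
    · intro a ha; rw [Finset.mem_Icc] at ha; rw [Finset.mem_range]; omega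
    · intro k hk; rw [Finset.mem_range] at hk; omega
    · intro a ha; rw [Finset.mem_Icc] at ha; omega
    · intro k hk; rfl
  · have e1 : N - 1 - j = (N - 2 - j) + 1 := by omega
    have e2 : N - 1 - (N - 2 - j) = j + 1 := by omega
    rw [e1]
    simp only [iterSym]
    rw [e2, iterSym_mul N m _ _ _ (by omega), mul_comm]
    intro c τ hc
    exact Ucross_indep _ _ _ (by omega) (by omega) _
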